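/- Suppose n ≡ 0 (mod 4). Then the fixed subring A^G is generated as a ℂ-algebra by the orbit sums of degrees n and 2n; that is, A^G equals the ℂ-subalgebra of A generated by the set {O(n−i, i) : 0 ≤ i ≤ n/2} ∪ {O(2n−i, i) : 0 ≤ i ≤ n}. (This is the upper bound β(g) ≤ 2n.) -/

import Mathlib

/-!
Setting: `lam n = exp(2πi/n)` is a primitive `n`-th root of unity in `ℂ`.
`SkewAlg` is the `(-1)`-skew polynomial ring `A = ℂ⟨u,v⟩/(uv+vu)`, with
generators `uGen`, `vGen`.  The automorphism `g` (of order `2n`) is determined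
by `g u = v`, `g v = lam n • u`, and generates the cyclic group `G`, so that
the fixed subring `A^G` is `{a | g a = a}`.  The orbit sum is
`orbitSum n a b = u^a v^b + (-1)^(a*b) * (lam n)^b • (u^b v^a)`.
-/

noncomputable section

/-- `lam n = exp(2πi/n)`, a primitive `n`-th root of unity. -/
def lam (n : ℕ) : ℂ := Complex.exp (2 * (Real.pi : ℂ) * Complex.I / (n : ℂ))

/-- The defining relation of the `(-1)`-skew polynomial ring: `uv + vu = 0`. -/
inductive SkewRel : FreeAlgebra ℂ (Fin 2) → FreeAlgebra ℂ (Fin 2) → Prop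
  | rel : SkewRel (FreeAlgebra.ι ℂ 0 * FreeAlgebra.ι ℂ 1 + FreeAlgebra.ι ℂ 1 * FreeAlgebra.ι ℂ 0) 0

/-- The skew polynomial ring `A = ℂ⟨u,v⟩/(uv+vu)`. -/
abbrev SkewAlg : Type := RingQuot SkewRel

/-- The generator `u` of `A`. -/
def uGen : SkewAlg := RingQuot.mkAlgHom ℂ SkewRel (FreeAlgebra.ι ℂ 0)

/-- The generator `v` of `A`. -/
def vGen : SkewAlg := RingQuot.mkAlgHom ℂ SkewRel (FreeAlgebra.ι ℂ 1)

/-- Orbit sum `O(a,b) = u^a v^b + (-1)^(ab) λ^b u^b v^a`. -/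
def orbitSum (n a b : ℕ) : SkewAlg :=
  uGen ^ a * vGen ^ b + ((-1 : ℂ) ^ (a * b) * lam n ^ b) • (uGen ^ b * vGen ^ a)

theorem vu_eq : vGen * uGen = (-1 : ℂ) • (uGen * vGen) := by
  have h := RingQuot.mkAlgHom_rel ℂ SkewRel.rel
  simp only [map_add, map_mul, map_zero] at h
  have h' : uGen * vGen + vGen * uGen = 0 := h
  calc vGen * uGen = ((-1 : ℂ) + 1) • (uGen * vGen) + vGen * uGen := by
        rw [neg_add_cancel, zero_smul, zero_add]
    _ = (-1 : ℂ) • (uGen * vGen) + (uGen * vGen + vGen * uGen) := by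
        rw [add_smul, one_smul, add_assoc]
    _ = (-1 : ℂ) • (uGen * vGen) := by rw [h', add_zero]

theorem vpow_u (b : ℕ) : vGen ^ b * uGen = ((-1 : ℂ) ^ b) • (uGen * vGen ^ b) := by
  induction b with
  | zero => simp
  | succ b ih =>
    rw [pow_succ, mul_assoc, vu_eq, mul_smul_comm, ← mul_assoc, ih, smul_mul_assoc, mul_assoc,
      smul_smul, pow_succ' (-1 : ℂ)]

theorem vpow_upow (a b : ℕ) :
    vGen ^ b * uGen ^ a = ((-1 : ℂ) ^ (a * b)) • (uGen ^ a * vGen ^ b) := by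
  induction a with
  | zero => simp
  | succ a ih =>
    rw [pow_succ, ← mul_assoc, ih, smul_mul_assoc, mul_assoc, vpow_u, mul_smul_comm, smul_smul,
      ← mul_assoc, ← pow_add]
    congr 2
    ring

theorem lam_prim (n : ℕ) (hn : 0 < n) : IsPrimitiveRoot (lam n) n :=
  Complex.isPrimitiveRoot_exp n (Nat.pos_iff_ne_zero.1 hn)

/-- The span of ordered monomials is everything. -/
theorem mem_span_monomials (x : SkewAlg) :
    x ∈ Submodule.span ℂ (Set.range fun p : ℕ × ℕ => uGen ^ p.1 * vGen ^ p.2) := by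
  set M := Submodule.span ℂ (Set.range fun p : ℕ × ℕ => uGen ^ p.1 * vGen ^ p.2) with hM
  have hmon : ∀ a b : ℕ, uGen ^ a * vGen ^ b ∈ M := fun a b =>
    Submodule.subset_span ⟨(a, b), rfl⟩
  have hmul : M * M ≤ M := by
    rw [hM, Submodule.span_mul_span, Submodule.span_le]
    rintro _ ⟨_, ⟨⟨a, b⟩, rfl⟩, _, ⟨⟨c, d⟩, rfl⟩, rfl⟩
    have : uGen ^ a * vGen ^ b * (uGen ^ c * vGen ^ d)
        = ((-1 : ℂ) ^ (c * b)) • (uGen ^ (a + c) * vGen ^ (b + d)) := by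
      rw [mul_assoc, ← mul_assoc (vGen ^ b), vpow_upow, smul_mul_assoc, mul_smul_comm, pow_add,
        pow_add]
      simp only [mul_assoc]
    show uGen ^ a * vGen ^ b * (uGen ^ c * vGen ^ d) ∈ M
    rw [this]
    exact M.smul_mem _ (hmon _ _)
  obtain ⟨y, rfl⟩ := RingQuot.mkAlgHom_surjective ℂ SkewRel x
  induction y using FreeAlgebra.induction with
  | grade0 r =>
    rw [AlgHom.commutes, Algebra.algebraMap_eq_smul_one]
    exact M.smul_mem _ (by simpa using hmon 0 0)
  | grade1 i =>
    fin_cases i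
    · simpa [uGen] using hmon 1 0
    · simpa [vGen] using hmon 0 1
  | mul a b ha hb => rw [map_mul]; exact hmul (Submodule.mul_mem_mul ha hb)
  | add a b ha hb => rw [map_add]; exact M.add_mem ha hb

section Action

variable (n : ℕ) (g : SkewAlg ≃ₐ[ℂ] SkewAlg)

theorem g_mono (hgu : g uGen = vGen) (hgv : g vGen = lam n • uGen) (a b : ℕ) :
    g (uGen ^ a * vGen ^ b) = ((-1 : ℂ) ^ (a * b) * lam n ^ b) • (uGen ^ b * vGen ^ a) := by
  rw [map_mul, map_pow, map_pow, hgu, hgv, smul_pow, mul_smul_comm, vpow_upow, smul_smul]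
  congr 1
  ring

theorem orbitSum_eq (hgu : g uGen = vGen) (hgv : g vGen = lam n • uGen) (a b : ℕ) :
    orbitSum n a b = uGen ^ a * vGen ^ b + g (uGen ^ a * vGen ^ b) := by
  rw [g_mono n g hgu hgv, orbitSum]

theorem gg_mono (hgu : g uGen = vGen) (hgv : g vGen = lam n • uGen) (a b : ℕ) :
    g (g (uGen ^ a * vGen ^ b)) = (lam n ^ (a + b)) • (uGen ^ a * vGen ^ b) := by
  simp only [map_mul, map_pow, hgu, hgv, map_smul, smul_pow, mul_smul_comm, smul_mul_assoc,
    smul_smul, pow_add]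
  rw [mul_comm (lam n ^ b)]

theorem orbitSum_fixed (hn : 0 < n) (hgu : g uGen = vGen) (hgv : g vGen = lam n • uGen)
    (a b : ℕ) (h : n ∣ a + b) : g (orbitSum n a b) = orbitSum n a b := by
  rw [orbitSum_eq n g hgu hgv, map_add, gg_mono n g hgu hgv,
    (lam_prim n hn).pow_eq_one_iff_dvd _ |>.2 h, one_smul, add_comm]

theorem orbitSum_swap (hn : 0 < n) (hgu : g uGen = vGen) (hgv : g vGen = lam n • uGen)
    (a b : ℕ) (h : n ∣ a + b) :
    orbitSum n b a = ((-1 : ℂ) ^ (a * b) * lam n ^ a) • orbitSum n a b := by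
  have h1 : lam n ^ a * lam n ^ b = 1 := by
    rw [← pow_add]; exact ((lam_prim n hn).pow_eq_one_iff_dvd _).2 h
  have h2 : ((-1 : ℂ) ^ (a * b)) * (-1) ^ (a * b) = 1 := by
    rw [← mul_pow]; simp
  have h3 : (-1 : ℂ) ^ (a * b) * lam n ^ a * ((-1) ^ (a * b) * lam n ^ b) = 1 := by
    linear_combination h1 * ((-1 : ℂ) ^ (a * b)) * (-1) ^ (a * b) + h2
  rw [orbitSum, orbitSum, smul_add, smul_smul, h3, one_smul, add_comm, mul_comm b a]

theorem orbitSum_mem (hn : 0 < n) (h2 : Even n)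
    (hgu : g uGen = vGen) (hgv : g vGen = lam n • uGen) (S : Subalgebra ℂ SkewAlg)
    (hS1 : ∀ i, i ≤ n / 2 → orbitSum n (n - i) i ∈ S)
    (hS2 : ∀ i, i ≤ n → orbitSum n (2 * n - i) i ∈ S) (k : ℕ) :
    ∀ a b : ℕ, a + b = k * n → orbitSum n a b ∈ S := by
  have hln : lam n ^ n = 1 := (lam_prim n hn).pow_eq_one
  have hcomm : ∀ b, vGen ^ n * uGen ^ b = uGen ^ b * vGen ^ n := fun b => by
    rw [vpow_upow, (h2.mul_left b).neg_one_pow, one_smul]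
  have hcomm' : ∀ b, vGen ^ b * uGen ^ n = uGen ^ n * vGen ^ b := fun b => by
    rw [vpow_upow, (h2.mul_right b).neg_one_pow, one_smul]
  have hgun : g (uGen ^ n) = vGen ^ n := by rw [map_pow, hgu]
  have hgvn : g (vGen ^ n) = uGen ^ n := by rw [map_pow, hgv, smul_pow, hln, one_smul]
  have hp : uGen ^ n * vGen ^ n ∈ S := by
    have h := hS2 n le_rfl
    rw [show 2 * n - n = n by omega, orbitSum_eq n g hgu hgv, map_mul, hgun, hgvn, hcomm,
      ← two_smul ℂ] at h
    have := S.smul_mem h (2⁻¹ : ℂ)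
    rwa [smul_smul, inv_mul_cancel₀ two_ne_zero, one_smul] at this
  have hs : uGen ^ n + vGen ^ n ∈ S := by
    have h := hS1 0 (Nat.zero_le _)
    rw [orbitSum_eq n g hgu hgv] at h
    simpa [hgu] using h
  have swap : ∀ a b, n ∣ a + b → orbitSum n a b ∈ S → orbitSum n b a ∈ S := fun a b h hm => by
    rw [orbitSum_swap n g hn hgu hgv a b h]
    exact S.smul_mem hm _
  -- shifting by `u^n v^n`
  have shift : ∀ a b, orbitSum n (a + n) (b + n) = uGen ^ n * vGen ^ n * orbitSum n a b := by
    intro a b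
    have e : uGen ^ (a + n) * vGen ^ (b + n) = uGen ^ n * vGen ^ n * (uGen ^ a * vGen ^ b) := by
      rw [mul_assoc, ← mul_assoc (vGen ^ n), hcomm, mul_assoc, ← pow_add, ← mul_assoc, ← pow_add,
        add_comm a, add_comm b]
    rw [orbitSum_eq n g hgu hgv, orbitSum_eq n g hgu hgv, e, map_mul g (uGen ^ n * vGen ^ n),
      map_mul g (uGen ^ n), hgun, hgvn, hcomm, mul_add]
  have mulsum : ∀ a b, orbitSum n (a + n) b
      = (uGen ^ n + vGen ^ n) * orbitSum n a b - orbitSum n a (b + n) := by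
    intro a b
    have e1 : uGen ^ (a + n) * vGen ^ b = uGen ^ n * (uGen ^ a * vGen ^ b) := by
      rw [← mul_assoc, ← pow_add, add_comm a]
    have e2 : uGen ^ a * vGen ^ (b + n) = vGen ^ n * (uGen ^ a * vGen ^ b) := by
      rw [← mul_assoc, hcomm, mul_assoc, ← pow_add, add_comm b]
    rw [orbitSum_eq n g hgu hgv, orbitSum_eq n g hgu hgv, orbitSum_eq n g hgu hgv, e1, e2,
      map_mul g (uGen ^ n), map_mul g (vGen ^ n), hgun, hgvn]
    noncomm_ring
  induction k using Nat.strong_induction_on with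
  | _ k ih =>
    intro a b hab
    have hd : n ∣ a + b := hab ▸ Dvd.intro_left k rfl
    match k, ih, hab with
    | 0, _, hab =>
      obtain ⟨rfl, rfl⟩ : a = 0 ∧ b = 0 := by omega
      simpa [orbitSum] using S.add_mem S.one_mem S.one_mem
    | 1, _, hab =>
      rcases le_total b (n / 2) with h | h
      · have := hS1 b h
        rwa [show n - b = a by omega] at this
      · have := hS1 a (by obtain ⟨m, rfl⟩ := h2; omega)
        rw [show n - a = b by omega] at this
        exact swap b a (by rwa [add_comm]) this
    | 2, _, hab =>
      rcases le_total b n with h | h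
      · have := hS2 b h
        rwa [show 2 * n - b = a by omega] at this
      · have := hS2 a (by omega)
        rw [show 2 * n - a = b by omega] at this
        exact swap b a (by rwa [add_comm]) this
    | k + 3, ih, hab =>
      have hk : (k + 3) * n = (k + 1) * n + n + n := by ring
      have hk2 : (k + 2) * n = (k + 1) * n + n := by ring
      have hk1 : (k + 1) * n = k * n + n := by ring
      have both : ∀ a b, n ≤ a → n ≤ b → a + b = (k + 3) * n → orbitSum n a b ∈ S := by
        intro a b ha hb hab
        obtain ⟨a, rfl⟩ := Nat.exists_eq_add_of_le' ha
        obtain ⟨b, rfl⟩ := Nat.exists_eq_add_of_le' hb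
        rw [shift]
        exact S.mul_mem hp (ih (k + 1) (by omega) a b (by omega))
      have small : ∀ a b, b < n → a + b = (k + 3) * n → orbitSum n a b ∈ S := by
        intro a b hb hab
        obtain ⟨a, rfl⟩ := Nat.exists_eq_add_of_le' (show n ≤ a by omega)
        rw [mulsum]
        exact S.sub_mem (S.mul_mem hs (ih (k + 2) (by omega) a b (by omega)))
          (both a (b + n) (by omega) (by omega) (by omega))
      rcases lt_or_ge b n with hb | hb
      · exact small a b hb hab
      rcases lt_or_ge a n with ha | ha
      · exact swap b a (by rwa [add_comm]) (small b a ha (by omega))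
      · exact both a b ha hb hab

/-- The (unnormalised) averaging operator over the powers of `g ∘ g`. -/
def avg : SkewAlg →ₗ[ℂ] SkewAlg :=
  ∑ k ∈ Finset.range n, (g.toLinearMap ∘ₗ g.toLinearMap) ^ k

theorem avg_eigen (x : SkewAlg) (c : ℂ) (h : g (g x) = c • x) :
    avg n g x = (∑ k ∈ Finset.range n, c ^ k) • x := by
  rw [avg, LinearMap.sum_apply, Finset.sum_smul]
  refine Finset.sum_congr rfl fun k hk => ?_
  clear hk
  induction k with
  | zero => simp
  | succ k ih =>
    rw [pow_succ', Module.End.mul_apply, ih, map_smul]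
    simp [h, smul_smul, pow_succ]

theorem avg_mem (hn : 0 < n) (hgu : g uGen = vGen) (hgv : g vGen = lam n • uGen)
    (S : Subalgebra ℂ SkewAlg) (hS : ∀ a b : ℕ, n ∣ a + b → orbitSum n a b ∈ S) (x : SkewAlg) :
    avg n g x + g (avg n g x) ∈ S := by
  induction mem_span_monomials x using Submodule.span_induction with
  | mem x hx =>
    obtain ⟨⟨a, b⟩, rfl⟩ := hx
    dsimp only
    rw [avg_eigen n g _ _ (gg_mono n g hgu hgv a b), map_smul, ← smul_add,
      ← orbitSum_eq n g hgu hgv]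
    by_cases h : n ∣ a + b
    · exact S.smul_mem (hS a b h) _
    · have h1 : lam n ^ (a + b) ≠ 1 := fun e => h (((lam_prim n hn).pow_eq_one_iff_dvd _).1 e)
      rw [geom_sum_eq h1, ← pow_mul, mul_comm, pow_mul, (lam_prim n hn).pow_eq_one]
      simp
  | zero => simp
  | add x y _ _ hx hy =>
    have := S.add_mem hx hy
    rw [map_add, map_add]
    convert this using 1
    abel
  | smul c x _ hx =>
    rw [map_smul, map_smul, ← smul_add]
    exact S.smul_mem hx c

end Action

/-- If `n ≡ 0 (mod 4)` (and `n > 0`) then the fixed subring `A^G` is generated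
as a `ℂ`-algebra by the orbit sums of degrees `n` and `2n`. -/
theorem fixed_eq_adjoin_of_mod_four_eq_zero (n : ℕ) (hn : 0 < n) (h4 : n % 4 = 0)
    (g : SkewAlg ≃ₐ[ℂ] SkewAlg) (hgu : g uGen = vGen) (hgv : g vGen = lam n • uGen) :
    {a : SkewAlg | g a = a} =
      ↑(Algebra.adjoin ℂ
        ({x : SkewAlg | ∃ i : ℕ, i ≤ n / 2 ∧ x = orbitSum n (n - i) i} ∪
         {x : SkewAlg | ∃ i : ℕ, i ≤ n ∧ x = orbitSum n (2 * n - i) i})) := by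
  have h2 : Even n := by rw [Nat.even_iff]; omega
  apply Set.Subset.antisymm
  · intro x hx
    have hx : g x = x := hx
    set S := Algebra.adjoin ℂ
        ({x : SkewAlg | ∃ i : ℕ, i ≤ n / 2 ∧ x = orbitSum n (n - i) i} ∪
         {x : SkewAlg | ∃ i : ℕ, i ≤ n ∧ x = orbitSum n (2 * n - i) i}) with hSdef
    have hS : ∀ a b : ℕ, n ∣ a + b → orbitSum n a b ∈ S := by
      rintro a b ⟨k, hk⟩
      refine orbitSum_mem n g hn h2 hgu hgv S ?_ ?_ k a b (by rw [hk, mul_comm])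
      · exact fun i hi => Algebra.subset_adjoin (Or.inl ⟨i, hi, rfl⟩)
      · exact fun i hi => Algebra.subset_adjoin (Or.inr ⟨i, hi, rfl⟩)
    have h := avg_mem n g hn hgu hgv S hS x
    rw [avg_eigen n g x 1 (by rw [hx, hx, one_smul]), map_smul, hx, ← two_smul ℂ, smul_smul] at h
    simp only [one_pow, Finset.sum_const, Finset.card_range, nsmul_eq_mul, mul_one] at h
    have h' := S.smul_mem h ((2 * (n : ℂ))⁻¹)
    have hne : (2 * (n : ℂ)) ≠ 0 := mul_ne_zero two_ne_zero (Nat.cast_ne_zero.2 hn.ne')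
    rwa [smul_smul, inv_mul_cancel₀ hne, one_smul] at h'
  · intro x hx
    have hle : Algebra.adjoin ℂ
        ({x : SkewAlg | ∃ i : ℕ, i ≤ n / 2 ∧ x = orbitSum n (n - i) i} ∪
         {x : SkewAlg | ∃ i : ℕ, i ≤ n ∧ x = orbitSum n (2 * n - i) i})
        ≤ AlgHom.equalizer (g : SkewAlg →ₐ[ℂ] SkewAlg) (AlgHom.id ℂ SkewAlg) := by
      rw [Algebra.adjoin_le_iff]
      rintro _ (⟨i, hi, rfl⟩ | ⟨i, hi, rfl⟩)
      · exact orbitSum_fixed n g hn hgu hgv _ _ (by rw [Nat.sub_add_cancel (by omega)])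
      · exact orbitSum_fixed n g hn hgu hgv _ _
          (by rw [Nat.sub_add_cancel (by omega)]; exact Dvd.intro_left 2 rfl)
    exact hle hx
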